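/- For every α ∈ ℂ with α ≠ 1, the algebra 𝔑₉(α) degenerates to 𝔑₂^ℂ(−α/(1−α)²): the structure λ with table e₁e₁ = e₃, e₁e₂ = e₃, e₂e₂ = (−α/(1−α)²)e₃ lies in the closure of the GL(V)-orbit of the structure μ_α with table e₁e₂ = e₄, e₂e₁ = αe₄, e₂e₂ = e₃. -/

import Mathlib

noncomputable section

/-- `V = ℂ⁴`. -/
abbrev V : Type := Fin 4 → ℂ

/-- The standard basis vectors `e₁, e₂, e₃, e₄` of `V` (indexed by `0, 1, 2, 3`). -/
def e (i : Fin 4) : V := Pi.single i 1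

/-- The `GL(V)`-orbit `O(μ)` of an algebra structure `μ` on `V`, for the action
`(g • μ)(x, y) = g (μ (g⁻¹ x) (g⁻¹ y))`. -/
def orbit (μ : V →L[ℂ] V →L[ℂ] V) : Set (V →L[ℂ] V →L[ℂ] V) :=
  {ν | ∃ g : V ≃L[ℂ] V, ∀ x y : V, ν x y = g (μ (g.symm x) (g.symm y))}

/-!
In the basis `E₁ = e₂`, `E₂ = (1 - α)⁻¹ (e₂ - e₁)`, `E₃ = e₃`, `E₄ = t⁻¹ (e₃ - e₄)` of `V`, all the
products of `𝔑₉(α)` lie in the span of `e₃ = E₃` and `e₄ = E₃ - t E₄`. As `t → 0`, both of these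
contribute only to `E₃`, and the structure constants tend to those of `𝔑₂^ℂ(-α / (1 - α)²)`.
-/

open Filter Module Topology

section StructureConstants

variable {𝕜 ι E F : Type*} [NontriviallyNormedField 𝕜]
  [NormedAddCommGroup E] [NormedSpace 𝕜 E] [NormedAddCommGroup F] [NormedSpace 𝕜 F]

theorem bilinear_ext_basis (b : Basis ι 𝕜 E) {B B' : E →L[𝕜] E →L[𝕜] F}
    (h : ∀ i j, B (b i) (b j) = B' (b i) (b j)) : B = B' :=
  ContinuousLinearMap.coe_injective <| b.ext fun i ↦
    ContinuousLinearMap.coe_injective <| b.ext fun j ↦ h i j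

variable [CompleteSpace 𝕜] [Finite ι] [FiniteDimensional 𝕜 F]

/-- The homeomorphic identification of multiplication tables `ι → ι → F` with bilinear maps
`E × E → F`, relative to a basis of `E` indexed by `ι`. -/
def bilinearOfTable (b : Basis ι 𝕜 E) : (ι → ι → F) ≃L[𝕜] (E →L[𝕜] E →L[𝕜] F) :=
  have : FiniteDimensional 𝕜 E := .of_basis b
  LinearEquiv.toContinuousLinearEquiv <|
    LinearEquiv.piCongrRight (fun _ ↦ b.constr 𝕜 ≪≫ₗ LinearMap.toContinuousLinearMap) ≪≫ₗ
      b.constr 𝕜 ≪≫ₗ LinearMap.toContinuousLinearMap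

theorem bilinearOfTable_apply_basis (b : Basis ι 𝕜 E) (c : ι → ι → F) (i j : ι) :
    bilinearOfTable b c (b i) (b j) = c i j := by
  simp [bilinearOfTable]

end StructureConstants

section Degeneration

variable {μ ν lam : V →L[ℂ] V →L[ℂ] V}

theorem bilinear_ext_e (h : ∀ i j, μ (e i) (e j) = ν (e i) (e j)) : μ = ν :=
  bilinear_ext_basis (Pi.basisFun ℂ (Fin 4)) (by simpa only [e, Pi.basisFun_apply] using h)

theorem bilinearOfTable_apply_e (c : Fin 4 → Fin 4 → V) (i j : Fin 4) :
    bilinearOfTable (Pi.basisFun ℂ (Fin 4)) c (e i) (e j) = c i j := by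
  simpa only [e, Pi.basisFun_apply] using bilinearOfTable_apply_basis (Pi.basisFun ℂ (Fin 4)) c i j

theorem mem_orbit_of_basis (b : Basis (Fin 4) ℂ V)
    (h : ∀ i j, μ (b i) (b j) = ∑ k, ν (e i) (e j) k • b k) : ν ∈ orbit μ := by
  let g : V ≃L[ℂ] V := b.equivFun.toContinuousLinearEquiv
  have g_symm_e (i : Fin 4) : g.symm (e i) = b i := by
    simp [g, e]
  let gμ : V →L[ℂ] V →L[ℂ] V :=
    (ContinuousLinearMap.compL ℂ V V V g).comp
      (μ.bilinearComp (g.symm : V →L[ℂ] V) (g.symm : V →L[ℂ] V))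
  have ν_eq_gμ : ν = gμ := bilinear_ext_e fun i j ↦ by
    change ν (e i) (e j) = g (μ (g.symm (e i)) (g.symm (e j)))
    rw [g_symm_e, g_symm_e, h, ← b.equivFun_symm_apply]
    exact (b.equivFun.apply_symm_apply _).symm
  exact ⟨g, fun x y ↦ by rw [ν_eq_gμ]; rfl⟩

theorem mem_closure_orbit_of_tendsto_table {T : Type*} {l : Filter T} [l.NeBot]
    {b : T → Fin 4 → V} {c : T → Fin 4 → Fin 4 → V}
    (hb : ∀ᶠ t in l, LinearIndependent ℂ (b t))
    (hc : ∀ᶠ t in l, ∀ i j, μ (b t i) (b t j) = ∑ k, c t i j k • b t k)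
    (hlim : Tendsto c l (𝓝 fun i j ↦ lam (e i) (e j))) : lam ∈ closure (orbit μ) := by
  let Φ : (Fin 4 → Fin 4 → V) ≃L[ℂ] (V →L[ℂ] V →L[ℂ] V) := bilinearOfTable (Pi.basisFun ℂ (Fin 4))
  have Φ_lam : Φ (fun i j ↦ lam (e i) (e j)) = lam :=
    bilinear_ext_e fun i j ↦ bilinearOfTable_apply_e _ i j
  have tendsto_lam : Tendsto (fun t ↦ Φ (c t)) l (𝓝 lam) := by
    simpa only [Φ_lam, Function.comp_def] using (Φ.continuous.tendsto _).comp hlim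
  refine mem_closure_of_tendsto tendsto_lam ?_
  filter_upwards [hb, hc] with t hbt hct
  refine mem_orbit_of_basis (basisOfLinearIndependentOfCardEqFinrank hbt (by simp)) fun i j ↦ ?_
  simpa only [coe_basisOfLinearIndependentOfCardEqFinrank, Φ, bilinearOfTable_apply_e] using hct i j

end Degeneration

/-- The multiplication table of `𝔑₉(α)`. -/
def tableN9 (α : ℂ) : Fin 4 → Fin 4 → V :=
  ![![0, e 3, 0, 0], ![α • e 3, e 2, 0, 0], ![0, 0, 0, 0], ![0, 0, 0, 0]]

/-- The multiplication table of `𝔑₂^ℂ(β)`. -/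
def tableN2 (β : ℂ) : Fin 4 → Fin 4 → V :=
  ![![e 2, e 2, 0, 0], ![0, β • e 2, 0, 0], ![0, 0, 0, 0], ![0, 0, 0, 0]]

/-- The basis `E₁, E₂, E₃, E₄` of `V`, depending on a parameter `t ≠ 0`, along which `𝔑₉(α)`
degenerates as `t → 0`. -/
def degeneratingBasis (α t : ℂ) : Fin 4 → V :=
  ![e 1, (1 - α)⁻¹ • (e 1 - e 0), e 2, t⁻¹ • (e 2 - e 3)]

/-- The multiplication table of `𝔑₉(α)` relative to `degeneratingBasis α t`: the entry at `(i, j)`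
is the coordinate vector of the product of the `i`-th and `j`-th basis vectors. -/
def degeneratingTable (α t : ℂ) : Fin 4 → Fin 4 → V :=
  ![![e 2, e 2 + (t * α / (1 - α)) • e 3, 0, 0],
    ![(t / (1 - α)) • e 3, (-α / (1 - α) ^ 2) • e 2 + (t * (1 + α) / (1 - α) ^ 2) • e 3, 0, 0],
    ![0, 0, 0, 0],
    ![0, 0, 0, 0]]

section DegeneratingBasis

variable {α t : ℂ}

theorem linearIndependent_degeneratingBasis (hα : α ≠ 1) (ht : t ≠ 0) :
    LinearIndependent ℂ (degeneratingBasis α t) := by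
  have h1α : 1 - α ≠ 0 := sub_ne_zero.mpr hα.symm
  have det_ne_zero : (Matrix.of (degeneratingBasis α t)).det ≠ 0 := by
    simp [Matrix.det_succ_row_zero, Fin.sum_univ_succ, degeneratingBasis, e, Fin.succAbove, h1α, ht]
  exact Matrix.linearIndependent_rows_of_det_ne_zero det_ne_zero

theorem e_apply (i j : Fin 4) : e i j = if j = i then 1 else 0 := Pi.single_apply i 1 j

theorem mul_degeneratingBasis {μ : V →L[ℂ] V →L[ℂ] V} (hα : α ≠ 1) (ht : t ≠ 0)
    (hμ : ∀ i j, μ (e i) (e j) = tableN9 α i j) (i j : Fin 4) :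
    μ (degeneratingBasis α t i) (degeneratingBasis α t j) =
      ∑ k, degeneratingTable α t i j k • degeneratingBasis α t k := by
  have h1α : 1 - α ≠ 0 := sub_ne_zero.mpr hα.symm
  have expand_E₁E₂ : (1 - α)⁻¹ • (e 2 - α • e 3) =
      e 2 + (t * α / (1 - α)) • t⁻¹ • (e 2 - e 3) := by
    match_scalars <;> field_simp
    ring
  have expand_E₂E₁ : (1 - α)⁻¹ • (e 2 - e 3) = (t / (1 - α)) • t⁻¹ • (e 2 - e 3) := by
    match_scalars <;> field_simp
  have expand_E₂E₂ : (1 - α)⁻¹ • (1 - α)⁻¹ • (e 2 - α • e 3 - e 3) =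
      (-α / (1 - α) ^ 2) • e 2 + (t * (1 + α) / (1 - α) ^ 2) • t⁻¹ • (e 2 - e 3) := by
    match_scalars <;> field_simp <;> ring
  fin_cases i <;> fin_cases j <;>
    simp [degeneratingBasis, degeneratingTable, Fin.sum_univ_four, hμ, tableN9, e_apply,
      expand_E₁E₂, expand_E₂E₁, expand_E₂E₂]

theorem degeneratingTable_zero (α : ℂ) :
    degeneratingTable α 0 = tableN2 (-α / (1 - α) ^ 2) := by
  simp [degeneratingTable, tableN2]

theorem continuous_degeneratingTable (α : ℂ) : Continuous (degeneratingTable α) := by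
  unfold degeneratingTable
  fun_prop

end DegeneratingBasis

/-- For every α ≠ 1, 𝔑₉(α) degenerates to 𝔑₂^ℂ(−α/(1−α)²). -/
theorem stmt14 (α : ℂ) (hα : α ≠ 1) (μ lam : V →L[ℂ] V →L[ℂ] V)
    (hμ : ∀ i j : Fin 4, μ (e i) (e j) =
    (![
      ![0, e 3, 0, 0],
      ![α • e 3, e 2, 0, 0],
      ![0, 0, 0, 0],
      ![0, 0, 0, 0]
     ] : Fin 4 → Fin 4 → V) i j)
    (hlam : ∀ i j : Fin 4, lam (e i) (e j) =
    (![
      ![e 2, e 2, 0, 0],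
      ![0, (-α / (1 - α) ^ 2) • e 2, 0, 0],
      ![0, 0, 0, 0],
      ![0, 0, 0, 0]
     ] : Fin 4 → Fin 4 → V) i j) :
    lam ∈ closure (orbit μ) := by
  have eventually_ne_zero : ∀ᶠ t : ℂ in 𝓝[≠] 0, t ≠ 0 := self_mem_nhdsWithin
  have tendsto_table : Tendsto (degeneratingTable α) (𝓝[≠] 0) (𝓝 fun i j ↦ lam (e i) (e j)) := by
    have table_lam : (fun i j ↦ lam (e i) (e j)) = degeneratingTable α 0 := by
      rw [degeneratingTable_zero]
      exact funext₂ hlam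
    rw [table_lam]
    exact (continuous_degeneratingTable α).continuousWithinAt
  exact mem_closure_orbit_of_tendsto_table
    (eventually_ne_zero.mono fun t ht ↦ linearIndependent_degeneratingBasis hα ht)
    (eventually_ne_zero.mono fun t ht ↦ mul_degeneratingBasis hα ht hμ) tendsto_table
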